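/- Let φ be a Lie algebra automorphism of I(X,K) which is a regular Hom-Lie structure on I(X,K). Then for every pair x < y in X there exists a (necessarily unique) nonzero scalar c(x,y) ∈ K such that φ(e_{xy}) − c(x,y)·e_{xy} ∈ J^{l(x,y)+1}; moreover c(x,y) = 1 whenever x ∉ Min(X) or y ∉ Max(X). -/

import Mathlib

open IncidenceAlgebra

/-- The Hom-Jacobi identity for a map `φ` on a Lie ring. -/
def HomJacobi {A : Type*} [LieRing A] (φ : A → A) : Prop :=
  ∀ a b c : A, ⁅⁅a, b⁆, φ c⁆ + ⁅⁅b, c⁆, φ a⁆ + ⁅⁅c, a⁆, φ b⁆ = 0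

/-- `φ` is a regular Hom-Lie structure: a Lie algebra automorphism satisfying Hom-Jacobi. -/
def IsRegHomLie (K : Type*) {A : Type*} [CommRing K] [LieRing A] [LieAlgebra K A]
    (φ : A → A) : Prop :=
  (∃ e : A ≃ₗ⁅K⁆ A, ⇑e = φ) ∧ HomJacobi φ

/-- The "matrix unit" `e_{xy}` of the incidence algebra, for `x ≤ y`. -/
def eSingle (K : Type*) [Field K] {X : Type*} [PartialOrder X] [DecidableEq X]
    (x y : X) (_h : x ≤ y) : IncidenceAlgebra K X where
  toFun u v := if u = x ∧ v = y then 1 else 0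
  eq_zero_of_not_le' u v huv := by
    split_ifs with h'
    · exact absurd (by rw [h'.1, h'.2]; exact _h) huv
    · rfl

/-- The multiplicative map `M_σ` on the incidence algebra: `(M_σ f)(x,y) = σ(x,y) f(x,y)`. -/
def Mmul (K : Type*) [Field K] {X : Type*} [PartialOrder X]
    (σ : X → X → K) (f : IncidenceAlgebra K X) : IncidenceAlgebra K X where
  toFun u v := σ u v * f u v
  eq_zero_of_not_le' u v huv := by
    rw [apply_eq_zero_of_not_le huv f, mul_zero]

/-- The conjugation map `ξ_β : f ↦ β f β⁻¹`. -/
noncomputable def xiMap {K : Type*} [Field K] {X : Type*} [PartialOrder X] [DecidableEq X]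
    [LocallyFiniteOrder X] (β : IncidenceAlgebra K X) :
    IncidenceAlgebra K X → IncidenceAlgebra K X :=
  fun f => β * f * Ring.inverse β

/-- `l(x,y)`: the maximal length of a chain from `x` to `y`. -/
noncomputable def chainLen {X : Type*} [PartialOrder X] (x y : X) : ℕ :=
  sSup {n : ℕ | ∃ c : Fin (n + 1) → X, StrictMono c ∧ c 0 = x ∧ c (Fin.last n) = y}

/-- `J^m`: the `K`-span of the `e_{xy}` with `x < y` and `l(x,y) ≥ m`. -/
noncomputable def Jpow (K : Type*) [Field K] {X : Type*} [PartialOrder X] [DecidableEq X]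
    (m : ℕ) : Submodule K (IncidenceAlgebra K X) :=
  Submodule.span K {f | ∃ x y, ∃ h : x < y, m ≤ chainLen x y ∧ f = eSingle K x y h.le}

attribute [local instance] LieRing.ofAssociativeRing

/-!
Filter `I(X, K)` by chain length: `F^m` consists of the `f` supported on pairs with `l(u, v) ≥ m`.
A Lie endomorphism `φ` preserves the filtration, because `e_{xy}` is an iterated commutator of
`l(x, y)` elements of the commutator ideal `F^1`, and `[F^m, F^1] ⊆ F^{m+1}`. To leading order a
commutator only sees diagonals: `[f, g](u, v) = (f(u, u) - f(v, v)) g(u, v)` if `g ∈ F^{l(u, v)}`.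
Hence `[e_x, e_{xy}] = e_{xy} = [e_{xy}, e_y]` forces the diagonals of `φ(e_x)` and `φ(e_y)` to jump
by one between `u` and `v` for every leading entry `(u, v)` of `φ(e_{xy})`. The Hom-Jacobi identity
makes the diagonal of `φ(e_z)` agree at any two comparable points other than `z`, so both `x` and
`y` lie in `{u, v}` and the only leading entry is the one at `(x, y)`. It is nonzero because `φ⁻¹`
preserves the filtration too, and for `x < y < w` the Hom-Jacobi identity equates the leading
entries of `φ(e_{xy})` and `φ(e_{yw})` with the diagonal jumps belonging to `e_{xw}`, which are one.
-/

section ChainLen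

variable {X : Type*} [PartialOrder X] {x y z : X}

theorem exists_ltSeries_length_eq_one (hxy : x < y) :
    ∃ p : LTSeries X, p.head = x ∧ p.last = y ∧ p.length = 1 :=
  ⟨(RelSeries.singleton _ x).snoc y hxy, RelSeries.head_snoc .., RelSeries.last_snoc .., rfl⟩

variable [LocallyFiniteOrder X]

theorem bddAbove_chain_lengths (x y : X) :
    BddAbove {n : ℕ | ∃ c : Fin (n + 1) → X, StrictMono c ∧ c 0 = x ∧ c (Fin.last n) = y} := by
  refine ⟨(Finset.Icc x y).card, ?_⟩
  rintro n ⟨c, hc, rfl, rfl⟩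
  have hcard : (Finset.univ : Finset (Fin (n + 1))).card ≤ _ :=
    Finset.card_le_card_of_injOn c
      (fun i _ ↦ Finset.mem_coe.2 <|
        Finset.mem_Icc.2 ⟨hc.monotone (Fin.zero_le i), hc.monotone (Fin.le_last i)⟩)
      hc.injective.injOn
  rw [Finset.card_fin] at hcard
  lia

theorem length_le_chainLen (p : LTSeries X) : p.length ≤ chainLen p.head p.last :=
  le_csSup (bddAbove_chain_lengths _ _) ⟨p, p.strictMono, rfl, rfl⟩

theorem exists_ltSeries_length_eq_chainLen (hxy : x ≤ y) :
    ∃ p : LTSeries X, p.head = x ∧ p.last = y ∧ p.length = chainLen x y := by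
  have hne : {n : ℕ | ∃ c : Fin (n + 1) → X,
      StrictMono c ∧ c 0 = x ∧ c (Fin.last n) = y}.Nonempty := by
    rcases hxy.eq_or_lt with rfl | hlt
    · exact ⟨0, fun _ ↦ x, Subsingleton.strictMono (α := Fin 1) _, rfl, rfl⟩
    · obtain ⟨p, h_head, h_last, -⟩ := exists_ltSeries_length_eq_one hlt
      exact ⟨_, p, p.strictMono, h_head, h_last⟩
  obtain ⟨c, hc, h_head, h_last⟩ := Nat.sSup_mem hne (bddAbove_chain_lengths x y)
  exact ⟨LTSeries.mk _ c hc, h_head, h_last, rfl⟩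

theorem chainLen_pos_iff (hxy : x ≤ y) : 0 < chainLen x y ↔ x < y := by
  constructor
  · intro hpos
    obtain ⟨p, rfl, rfl, hp⟩ := exists_ltSeries_length_eq_chainLen hxy
    rw [← hp] at hpos
    exact p.strictMono (Fin.lt_def.2 hpos)
  · intro hlt
    obtain ⟨p, rfl, rfl, hp⟩ := exists_ltSeries_length_eq_one hlt
    exact hp.ge.trans (length_le_chainLen p)

theorem chainLen_add_chainLen_le (hxy : x ≤ y) (hyz : y ≤ z) :
    chainLen x y + chainLen y z ≤ chainLen x z := by
  obtain ⟨p, rfl, rfl, hp⟩ := exists_ltSeries_length_eq_chainLen hxy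
  obtain ⟨q, hqp, rfl, hq⟩ := exists_ltSeries_length_eq_chainLen hyz
  simpa [← hp, ← hq] using length_le_chainLen (p.smash q hqp.symm)

theorem exists_le_chainLen_of_add_le_chainLen (hxy : x ≤ y) {m n : ℕ}
    (h : m + n ≤ chainLen x y) :
    ∃ z, x ≤ z ∧ z ≤ y ∧ m ≤ chainLen x z ∧ n ≤ chainLen z y := by
  obtain ⟨p, rfl, rfl, hp⟩ := exists_ltSeries_length_eq_chainLen hxy
  let i : Fin (p.length + 1) := ⟨m, by lia⟩
  refine ⟨p i, p.head_le i, p.monotone (Fin.le_last i), ?_, ?_⟩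
  · simpa using length_le_chainLen (p.take i)
  · have hdrop := length_le_chainLen (p.drop i)
    rw [RelSeries.head_drop, RelSeries.last_drop] at hdrop
    exact le_trans (show n ≤ p.length - m by lia) hdrop

end ChainLen

section ChainFiltration

/-- The chain-length filtration of the incidence algebra: the functions supported on pairs
`(u, v)` with `l(u, v) ≥ m`. For `m ≥ 1` and finite `X` it is the ideal `J^m`; for `m = 0` it is
the whole algebra. -/
def chainFiltration (R X : Type*) [Semiring R] [PartialOrder X] (m : ℕ) :
    Submodule R (IncidenceAlgebra R X) where
  carrier := {f | ∀ ⦃u v⦄, chainLen u v < m → f u v = 0}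
  zero_mem' _ _ _ := rfl
  add_mem' hf hg u v h := by rw [IncidenceAlgebra.add_apply, hf h, hg h, add_zero]
  smul_mem' c f hf u v h := by rw [constSMul_apply, hf h, smul_zero]

variable {R X : Type*} [PartialOrder X] {m n : ℕ} {u v : X}

variable [LocallyFiniteOrder X]

theorem lt_of_apply_ne_zero_of_mem_chainFiltration_one [Semiring R] {f : IncidenceAlgebra R X}
    (hf : f ∈ chainFiltration R X 1) (hne : f u v ≠ 0) : u < v := by
  refine (chainLen_pos_iff (le_of_ne_zero hne)).1 ?_
  by_contra! hle
  exact hne (hf (Nat.lt_one_iff.2 (Nat.le_zero.1 hle)))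

theorem mul_mem_chainFiltration [Semiring R] {f g : IncidenceAlgebra R X}
    (hf : f ∈ chainFiltration R X m) (hg : g ∈ chainFiltration R X n) :
    f * g ∈ chainFiltration R X (m + n) := by
  intro u v huv
  rw [IncidenceAlgebra.mul_apply]
  refine Finset.sum_eq_zero fun z hz ↦ ?_
  rw [Finset.mem_Icc] at hz
  have hadd := chainLen_add_chainLen_le hz.1 hz.2
  rcases lt_or_ge (chainLen u z) m with hlt | hge
  · rw [hf hlt, zero_mul]
  · rw [hg (by lia : chainLen z v < n), mul_zero]

theorem mul_apply_of_chainLen_le_left [Semiring R] {g : IncidenceAlgebra R X}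
    (f : IncidenceAlgebra R X) (hg : g ∈ chainFiltration R X m) (huv : chainLen u v ≤ m) :
    (f * g) u v = f u u * g u v := by
  rw [IncidenceAlgebra.mul_apply]
  refine Finset.sum_eq_single u (fun z hz hzu ↦ ?_) fun hu ↦ ?_
  · rw [Finset.mem_Icc] at hz
    have hadd := chainLen_add_chainLen_le hz.1 hz.2
    have hpos := (chainLen_pos_iff hz.1).2 (lt_of_le_of_ne hz.1 hzu.symm)
    rw [hg (by lia : chainLen z v < m), mul_zero]
  · rw [apply_eq_zero_of_not_le (fun h ↦ hu (Finset.left_mem_Icc.2 h)) g, mul_zero]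

theorem mul_apply_of_chainLen_le_right [Semiring R] {f : IncidenceAlgebra R X}
    (hf : f ∈ chainFiltration R X m) (g : IncidenceAlgebra R X) (huv : chainLen u v ≤ m) :
    (f * g) u v = f u v * g v v := by
  rw [IncidenceAlgebra.mul_apply]
  refine Finset.sum_eq_single v (fun z hz hzv ↦ ?_) fun hv ↦ ?_
  · rw [Finset.mem_Icc] at hz
    have hadd := chainLen_add_chainLen_le hz.1 hz.2
    have hpos := (chainLen_pos_iff hz.2).2 (lt_of_le_of_ne hz.2 hzv)
    rw [hf (by lia : chainLen u z < m), zero_mul]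
  · rw [apply_eq_zero_of_not_le (fun h ↦ hv (Finset.right_mem_Icc.2 h)) f, zero_mul]

variable [DecidableEq X]

theorem lie_mem_chainFiltration [Ring R] {f g : IncidenceAlgebra R X}
    (hf : f ∈ chainFiltration R X m) (hg : g ∈ chainFiltration R X n) :
    ⁅f, g⁆ ∈ chainFiltration R X (m + n) := by
  rw [Ring.lie_def]
  exact sub_mem (mul_mem_chainFiltration hf hg) (add_comm n m ▸ mul_mem_chainFiltration hg hf)

theorem lie_apply_of_chainLen_le [CommRing R] {g : IncidenceAlgebra R X}
    (f : IncidenceAlgebra R X) (hg : g ∈ chainFiltration R X m) (huv : chainLen u v ≤ m) :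
    ⁅f, g⁆ u v = (f u u - f v v) * g u v := by
  rw [Ring.lie_def, IncidenceAlgebra.sub_apply, mul_apply_of_chainLen_le_left f hg huv,
    mul_apply_of_chainLen_le_right hg f huv]
  ring

theorem lie_mem_chainFiltration_one [CommRing R] (f g : IncidenceAlgebra R X) :
    ⁅f, g⁆ ∈ chainFiltration R X 1 := by
  intro u v huv
  have hg : g ∈ chainFiltration R X 0 := fun _ _ h ↦ absurd h (Nat.not_lt_zero _)
  rw [lie_apply_of_chainLen_le f hg (Nat.lt_one_iff.1 huv).le]
  by_cases hle : u ≤ v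
  · have huv_eq : u = v :=
      hle.eq_of_not_lt fun hlt ↦ ((chainLen_pos_iff hle).2 hlt).ne' (Nat.lt_one_iff.1 huv)
    rw [huv_eq, sub_self, zero_mul]
  · rw [apply_eq_zero_of_not_le hle, mul_zero]

theorem diag_sub_diag_eq_of_lie_eq_smul [CommRing R] [IsDomain R] {f g : IncidenceAlgebra R X}
    {c : R} (hfg : ⁅f, g⁆ = c • g) (hg : g ∈ chainFiltration R X m) (huv : chainLen u v ≤ m)
    (hne : g u v ≠ 0) : f u u - f v v = c := by
  refine mul_right_cancel₀ hne ?_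
  rw [← lie_apply_of_chainLen_le f hg huv, hfg, constSMul_apply, smul_eq_mul]

end ChainFiltration

section MatrixUnits

variable {K : Type*} [Field K] {X : Type*} [PartialOrder X] [DecidableEq X] {x y z w : X}

theorem eSingle_apply (hxy : x ≤ y) (u v : X) :
    eSingle K x y hxy u v = if u = x ∧ v = y then 1 else 0 :=
  rfl

theorem eSingle_apply_self (hxy : x ≤ y) : eSingle K x y hxy x y = 1 :=
  if_pos ⟨rfl, rfl⟩

theorem eSingle_apply_of_ne (hxy : x ≤ y) {u v : X} (h : ¬(u = x ∧ v = y)) :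
    eSingle K x y hxy u v = 0 :=
  if_neg h

theorem eSingle_mem_chainFiltration_iff (hxy : x ≤ y) {m : ℕ} :
    eSingle K x y hxy ∈ chainFiltration K X m ↔ m ≤ chainLen x y := by
  refine ⟨fun h ↦ ?_, fun hm u v huv ↦ eSingle_apply_of_ne hxy ?_⟩
  · by_contra! hlt
    exact one_ne_zero ((eSingle_apply_self hxy).symm.trans (h hlt))
  · rintro ⟨rfl, rfl⟩
    exact hm.not_gt huv

theorem sum_smul_eSingle [Fintype {p : X × X // p.1 ≤ p.2}] (f : IncidenceAlgebra K X) :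
    ∑ p : {p : X × X // p.1 ≤ p.2}, f p.1.1 p.1.2 • eSingle K p.1.1 p.1.2 p.2 = f := by
  ext u v huv
  let ev : IncidenceAlgebra K X →+ K := ⟨⟨fun g ↦ g u v, rfl⟩, fun _ _ ↦ rfl⟩
  change ev _ = f u v
  rw [map_sum, Finset.sum_eq_single ⟨(u, v), huv⟩ _ (by simp)]
  · change f u v * eSingle K u v huv u v = f u v
    rw [eSingle_apply_self, mul_one]
  · rintro ⟨⟨a, b⟩, hab⟩ - hne
    change f a b * eSingle K a b hab u v = 0
    rw [eSingle_apply_of_ne, mul_zero]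
    rintro ⟨rfl, rfl⟩
    exact hne rfl

theorem chainFiltration_le_of_forall_eSingle_mem [Finite X] {m : ℕ}
    {S : Submodule K (IncidenceAlgebra K X)}
    (hS : ∀ ⦃x y : X⦄ (hxy : x ≤ y), m ≤ chainLen x y → eSingle K x y hxy ∈ S) :
    chainFiltration K X m ≤ S := by
  intro f hf
  have := Fintype.ofFinite {p : X × X // p.1 ≤ p.2}
  rw [← sum_smul_eSingle f]
  refine sum_mem fun ⟨⟨u, v⟩, huv⟩ _ ↦ ?_
  rcases lt_or_ge (chainLen u v) m with hlt | hge
  · rw [hf hlt, zero_smul]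
    exact zero_mem S
  · exact S.smul_mem _ (hS huv hge)

variable [LocallyFiniteOrder X]

theorem Jpow_succ_eq_chainFiltration [Finite X] (m : ℕ) :
    Jpow K (X := X) (m + 1) = chainFiltration K X (m + 1) := by
  apply le_antisymm
  · refine Submodule.span_le.2 ?_
    rintro _ ⟨x, y, hxy, hm, rfl⟩
    exact (eSingle_mem_chainFiltration_iff hxy.le).2 hm
  · refine chainFiltration_le_of_forall_eSingle_mem fun x y hxy hm ↦ Submodule.subset_span ?_
    exact ⟨x, y, (chainLen_pos_iff hxy).1 (Nat.zero_lt_of_lt hm), hm, rfl⟩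

theorem eSingle_mul_apply (hxy : x ≤ y) (f : IncidenceAlgebra K X) (u v : X) :
    (eSingle K x y hxy * f) u v = if u = x then f y v else 0 := by
  rw [IncidenceAlgebra.mul_apply]
  split_ifs with hu
  · subst hu
    rw [Finset.sum_eq_single y, eSingle_apply_self, one_mul]
    · intro z _ hzy
      rw [eSingle_apply_of_ne hxy (fun h ↦ hzy h.2), zero_mul]
    · intro hy
      have hyv : ¬y ≤ v := fun hyv ↦ hy (Finset.mem_Icc.2 ⟨hxy, hyv⟩)
      rw [apply_eq_zero_of_not_le hyv, mul_zero]
  · refine Finset.sum_eq_zero fun z _ ↦ ?_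
    rw [eSingle_apply_of_ne hxy (fun h ↦ hu h.1), zero_mul]

theorem mul_eSingle_apply (hxy : x ≤ y) (f : IncidenceAlgebra K X) (u v : X) :
    (f * eSingle K x y hxy) u v = if v = y then f u x else 0 := by
  rw [IncidenceAlgebra.mul_apply]
  split_ifs with hv
  · subst hv
    rw [Finset.sum_eq_single x, eSingle_apply_self, mul_one]
    · intro z _ hzx
      rw [eSingle_apply_of_ne hxy (fun h ↦ hzx h.1), mul_zero]
    · intro hx
      have hux : ¬u ≤ x := fun hux ↦ hx (Finset.mem_Icc.2 ⟨hux, hxy⟩)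
      rw [apply_eq_zero_of_not_le hux, zero_mul]
  · refine Finset.sum_eq_zero fun z _ ↦ ?_
    rw [eSingle_apply_of_ne hxy (fun h ↦ hv h.2), mul_zero]

theorem lie_eSingle_apply (hxy : x ≤ y) (f : IncidenceAlgebra K X) (u v : X) :
    ⁅f, eSingle K x y hxy⁆ u v = (if v = y then f u x else 0) - if u = x then f y v else 0 := by
  rw [Ring.lie_def, IncidenceAlgebra.sub_apply, mul_eSingle_apply, eSingle_mul_apply]

theorem eSingle_lie_apply (hxy : x ≤ y) (f : IncidenceAlgebra K X) (u v : X) :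
    ⁅eSingle K x y hxy, f⁆ u v = (if u = x then f y v else 0) - if v = y then f u x else 0 := by
  rw [Ring.lie_def, IncidenceAlgebra.sub_apply, mul_eSingle_apply, eSingle_mul_apply]

theorem eSingle_mul_eSingle (hxz : x ≤ z) (hzy : z ≤ y) :
    eSingle K x z hxz * eSingle K z y hzy = eSingle K x y (hxz.trans hzy) := by
  ext u v _
  simp only [eSingle_mul_apply, eSingle_apply, true_and, ite_and]

theorem eSingle_mul_eSingle_of_ne (hxy : x ≤ y) (hzw : z ≤ w) (hyz : y ≠ z) :
    eSingle K x y hxy * eSingle K z w hzw = 0 := by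
  ext u v _
  simp only [eSingle_mul_apply, eSingle_apply, hyz, false_and, if_false, ite_self,
    IncidenceAlgebra.zero_apply]

theorem lie_eSingle_eSingle (hxz : x ≤ z) (hzy : z ≤ y) (hne : x ≠ y) :
    ⁅eSingle K x z hxz, eSingle K z y hzy⁆ = eSingle K x y (hxz.trans hzy) := by
  rw [Ring.lie_def, eSingle_mul_eSingle, eSingle_mul_eSingle_of_ne _ _ hne.symm, sub_zero]

theorem lie_eSingle_eSingle_of_ne (hxy : x ≤ y) (hzw : z ≤ w) (hyz : y ≠ z) (hwx : w ≠ x) :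
    ⁅eSingle K x y hxy, eSingle K z w hzw⁆ = 0 := by
  rw [Ring.lie_def, eSingle_mul_eSingle_of_ne _ _ hyz, eSingle_mul_eSingle_of_ne _ _ hwx, sub_zero]

end MatrixUnits

section LieHom

variable {K : Type*} [Field K]
  {X : Type*} [PartialOrder X] [DecidableEq X] [LocallyFiniteOrder X]
  {Y : Type*} [PartialOrder Y] [DecidableEq Y] [LocallyFiniteOrder Y]
  (φ : IncidenceAlgebra K X →ₗ⁅K⁆ IncidenceAlgebra K Y) {x y : X}

theorem map_eSingle_mem_chainFiltration_one (hxy : x < y) :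
    φ (eSingle K x y hxy.le) ∈ chainFiltration K Y 1 := by
  rw [← lie_eSingle_eSingle le_rfl hxy.le hxy.ne, LieHom.map_lie]
  exact lie_mem_chainFiltration_one _ _

theorem map_eSingle_mem_chainFiltration (hxy : x ≤ y) {m : ℕ} (hm : m ≤ chainLen x y) :
    φ (eSingle K x y hxy) ∈ chainFiltration K Y m := by
  induction m generalizing y with
  | zero => exact fun _ _ h ↦ absurd h (Nat.not_lt_zero _)
  | succ m ih =>
    obtain ⟨z, hxz, hzy, hm_le, hpos⟩ := exists_le_chainLen_of_add_le_chainLen hxy hm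
    have hzy_lt : z < y := (chainLen_pos_iff hzy).1 hpos
    rw [← lie_eSingle_eSingle hxz hzy (hxz.trans_lt hzy_lt).ne, LieHom.map_lie]
    exact lie_mem_chainFiltration (ih hxz hm_le) (map_eSingle_mem_chainFiltration_one φ hzy_lt)

theorem map_mem_chainFiltration [Finite X] {m : ℕ} {f : IncidenceAlgebra K X}
    (hf : f ∈ chainFiltration K X m) : φ f ∈ chainFiltration K Y m :=
  chainFiltration_le_of_forall_eSingle_mem
    (S := (chainFiltration K Y m).comap (φ : IncidenceAlgebra K X →ₗ[K] IncidenceAlgebra K Y))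
    (fun _ _ hxy hm ↦ map_eSingle_mem_chainFiltration φ hxy hm) hf

variable {u v : Y}

theorem map_eSingle_left_diag_sub_diag (hxy : x < y) (huv : chainLen u v ≤ chainLen x y)
    (hne : φ (eSingle K x y hxy.le) u v ≠ 0) :
    φ (eSingle K x x le_rfl) u u - φ (eSingle K x x le_rfl) v v = 1 := by
  refine diag_sub_diag_eq_of_lie_eq_smul ?_ (map_eSingle_mem_chainFiltration φ hxy.le le_rfl) huv
    hne
  rw [← LieHom.map_lie, lie_eSingle_eSingle _ _ hxy.ne, one_smul]

theorem map_eSingle_right_diag_sub_diag (hxy : x < y) (huv : chainLen u v ≤ chainLen x y)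
    (hne : φ (eSingle K x y hxy.le) u v ≠ 0) :
    φ (eSingle K y y le_rfl) u u - φ (eSingle K y y le_rfl) v v = -1 := by
  refine diag_sub_diag_eq_of_lie_eq_smul ?_ (map_eSingle_mem_chainFiltration φ hxy.le le_rfl) huv
    hne
  rw [← lie_skew, ← LieHom.map_lie, lie_eSingle_eSingle _ _ hxy.ne, neg_one_smul]

end LieHom

namespace HomJacobi

theorem lie_lie_map_eq {A : Type*} [LieRing A] {φ : A → A} (hφ : HomJacobi φ) {a c : A} (b : A)
    (hca : ⁅c, a⁆ = 0) : ⁅⁅a, b⁆, φ c⁆ = ⁅φ a, ⁅b, c⁆⁆ := by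
  have hJacobi := hφ a b c
  rw [hca, zero_lie, add_zero] at hJacobi
  rw [eq_neg_of_add_eq_zero_left hJacobi, lie_skew]

variable {K : Type*} [Field K] {X : Type*} [PartialOrder X] [DecidableEq X]
  [LocallyFiniteOrder X] {x y w : X}

section Map

variable {φ : IncidenceAlgebra K X → IncidenceAlgebra K X}

theorem map_eSingle_diag_eq (hφ : HomJacobi φ) {u v z : X} (huv : u < v) (hzu : z ≠ u)
    (hzv : z ≠ v) :
    φ (eSingle K z z le_rfl) u u = φ (eSingle K z z le_rfl) v v := by
  have hlie : ⁅eSingle K u v huv.le, φ (eSingle K z z le_rfl)⁆ = 0 := by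
    rw [← lie_eSingle_eSingle le_rfl huv.le huv.ne,
      hφ.lie_lie_map_eq _ (lie_eSingle_eSingle_of_ne le_rfl le_rfl hzu hzu.symm),
      lie_eSingle_eSingle_of_ne huv.le le_rfl hzv.symm hzu, lie_zero]
  have happly := eSingle_lie_apply huv.le (φ (eSingle K z z le_rfl)) u v
  rw [hlie, if_pos rfl, if_pos rfl] at happly
  exact (sub_eq_zero.1 happly.symm).symm

theorem map_eSingle_apply_eq_left_diag (hφ : HomJacobi φ) (hxy : x < y) (hyw : y < w) :
    φ (eSingle K y w hyw.le) y w =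
      φ (eSingle K x x le_rfl) x x - φ (eSingle K x x le_rfl) w w := by
  have hxw : x < w := hxy.trans hyw
  have hlie := hφ.lie_lie_map_eq (eSingle K x y hxy.le)
    (lie_eSingle_eSingle_of_ne hyw.le le_rfl hxw.ne' hxy.ne)
  rw [lie_eSingle_eSingle le_rfl hxy.le hxy.ne, lie_eSingle_eSingle hxy.le hyw.le hxw.ne] at hlie
  have happly := congrFun (DFunLike.congr_fun hlie x) w
  simpa [eSingle_lie_apply, lie_eSingle_apply, hyw.ne'] using happly

theorem map_eSingle_apply_eq_right_diag (hφ : HomJacobi φ) (hxy : x < y) (hyw : y < w) :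
    φ (eSingle K x y hxy.le) x y =
      φ (eSingle K w w le_rfl) w w - φ (eSingle K w w le_rfl) x x := by
  have hxw : x < w := hxy.trans hyw
  have hlie := hφ.lie_lie_map_eq (eSingle K y w hyw.le)
    (lie_eSingle_eSingle_of_ne le_rfl hxy.le hxw.ne' hyw.ne)
  rw [lie_eSingle_eSingle hyw.le le_rfl hyw.ne, lie_eSingle_eSingle hxy.le hyw.le hxw.ne] at hlie
  have happly := congrFun (DFunLike.congr_fun hlie x) w
  simpa [eSingle_lie_apply, lie_eSingle_apply, hxy.ne] using happly.symm

end Map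

section LieHom

variable {φ : IncidenceAlgebra K X →ₗ⁅K⁆ IncidenceAlgebra K X}

theorem eq_and_eq_of_map_eSingle_apply_ne_zero (hφ : HomJacobi φ) (hxy : x < y) {u v : X}
    (hlen : chainLen u v ≤ chainLen x y) (hne : φ (eSingle K x y hxy.le) u v ≠ 0) :
    u = x ∧ v = y := by
  have huv : u < v := lt_of_apply_ne_zero_of_mem_chainFiltration_one
    (map_eSingle_mem_chainFiltration_one φ hxy) hne
  have hjump_x := map_eSingle_left_diag_sub_diag φ hxy hlen hne
  have hjump_y := map_eSingle_right_diag_sub_diag φ hxy hlen hne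
  have hx : x = u ∨ x = v := by
    by_contra! h
    rw [hφ.map_eSingle_diag_eq huv h.1 h.2, sub_self] at hjump_x
    exact zero_ne_one hjump_x
  have hy : y = u ∨ y = v := by
    by_contra! h
    rw [hφ.map_eSingle_diag_eq huv h.1 h.2, sub_self] at hjump_y
    exact neg_ne_zero.2 one_ne_zero hjump_y.symm
  rcases hx with rfl | rfl <;> rcases hy with rfl | rfl
  · exact absurd hxy (lt_irrefl _)
  · exact ⟨rfl, rfl⟩
  · exact absurd hxy huv.asymm
  · exact absurd hxy (lt_irrefl _)

theorem map_eSingle_sub_smul_mem_chainFiltration_iff (hφ : HomJacobi φ) (hxy : x < y) {c : K} :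
    φ (eSingle K x y hxy.le) - c • eSingle K x y hxy.le ∈
      chainFiltration K X (chainLen x y + 1) ↔ c = φ (eSingle K x y hxy.le) x y := by
  constructor
  · intro hmem
    have h_apply := hmem (Nat.lt_succ_self (chainLen x y))
    rw [IncidenceAlgebra.sub_apply, constSMul_apply, eSingle_apply_self, smul_eq_mul,
      mul_one] at h_apply
    exact (sub_eq_zero.1 h_apply).symm
  · rintro rfl u v hlen
    rw [IncidenceAlgebra.sub_apply, constSMul_apply, smul_eq_mul]
    by_cases huv : u = x ∧ v = y
    · rw [huv.1, huv.2, eSingle_apply_self, mul_one, sub_self]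
    · rw [eSingle_apply_of_ne hxy.le huv, mul_zero, sub_zero]
      by_contra hne
      exact huv (hφ.eq_and_eq_of_map_eSingle_apply_ne_zero hxy (Nat.le_of_lt_succ hlen) hne)

end LieHom

section LieEquiv

variable [Finite X] {φ : IncidenceAlgebra K X ≃ₗ⁅K⁆ IncidenceAlgebra K X}

theorem map_eSingle_apply_ne_zero (hφ : HomJacobi φ) (hxy : x < y) :
    φ (eSingle K x y hxy.le) x y ≠ 0 := by
  intro hzero
  have hmem : φ (eSingle K x y hxy.le) ∈ chainFiltration K X (chainLen x y + 1) := by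
    simpa using (map_eSingle_sub_smul_mem_chainFiltration_iff (φ := φ.toLieHom) hφ hxy).2
      hzero.symm
  have hmem_symm := map_mem_chainFiltration φ.symm.toLieHom hmem
  rw [LieEquiv.coe_toLieHom, LieEquiv.symm_apply_apply, eSingle_mem_chainFiltration_iff]
    at hmem_symm
  exact Nat.not_succ_le_self _ hmem_symm

theorem map_eSingle_apply_eq_one_of_lt_left (hφ : HomJacobi φ) (hwx : w < x) (hxy : x < y) :
    φ (eSingle K x y hxy.le) x y = 1 := by
  have hwy : w < y := hwx.trans hxy
  rw [hφ.map_eSingle_apply_eq_left_diag hwx hxy]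
  exact map_eSingle_left_diag_sub_diag φ.toLieHom hwy le_rfl (hφ.map_eSingle_apply_ne_zero hwy)

theorem map_eSingle_apply_eq_one_of_lt_right (hφ : HomJacobi φ) (hxy : x < y) (hyw : y < w) :
    φ (eSingle K x y hxy.le) x y = 1 := by
  have hxw : x < w := hxy.trans hyw
  rw [hφ.map_eSingle_apply_eq_right_diag hxy hyw, ← neg_sub, neg_eq_iff_eq_neg]
  exact map_eSingle_right_diag_sub_diag φ.toLieHom hxw le_rfl (hφ.map_eSingle_apply_ne_zero hxw)

theorem map_eSingle_sub_smul_mem_Jpow_iff (hφ : HomJacobi φ) (hxy : x < y) {c : K} :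
    φ (eSingle K x y hxy.le) - c • eSingle K x y hxy.le ∈ Jpow K (X := X) (chainLen x y + 1) ↔
      c = φ (eSingle K x y hxy.le) x y := by
  rw [Jpow_succ_eq_chainFiltration]
  exact map_eSingle_sub_smul_mem_chainFiltration_iff (φ := φ.toLieHom) hφ hxy

end LieEquiv

end HomJacobi

theorem stmt3_general {K : Type*} [Field K] {X : Type*} [PartialOrder X] [Finite X]
    [DecidableEq X] [LocallyFiniteOrder X]
    (φ : IncidenceAlgebra K X ≃ₗ⁅K⁆ IncidenceAlgebra K X) (hφ : HomJacobi ⇑φ)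
    {x y : X} (hxy : x < y) :
    (∃! c : K, c ≠ 0 ∧
        φ (eSingle K x y hxy.le) - c • eSingle K x y hxy.le ∈
          Jpow K (X := X) (chainLen x y + 1)) ∧
    ∀ c : K, c ≠ 0 →
      φ (eSingle K x y hxy.le) - c • eSingle K x y hxy.le ∈
        Jpow K (X := X) (chainLen x y + 1) →
      (¬IsMin x ∨ ¬IsMax y) → c = 1 := by
  simp_rw [hφ.map_eSingle_sub_smul_mem_Jpow_iff hxy]
  refine ⟨⟨_, ⟨hφ.map_eSingle_apply_ne_zero hxy, rfl⟩, fun c hc ↦ hc.2⟩, ?_⟩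
  rintro c - rfl (hx | hy)
  · obtain ⟨w, hwx⟩ := not_isMin_iff.1 hx
    exact hφ.map_eSingle_apply_eq_one_of_lt_left hwx hxy
  · obtain ⟨w, hyw⟩ := not_isMax_iff.1 hy
    exact hφ.map_eSingle_apply_eq_one_of_lt_right hxy hyw

theorem stmt3 {K : Type*} [Field K] {X : Type*} [PartialOrder X] [Fintype X] [DecidableEq X]
    [LocallyFiniteOrder X]
    (hcard : 1 < Fintype.card X)
    (hconn : ∀ x y : X, Relation.ReflTransGen (fun a b : X => a ≤ b ∨ b ≤ a) x y)
    (φ : IncidenceAlgebra K X ≃ₗ⁅K⁆ IncidenceAlgebra K X) (hφ : HomJacobi ⇑φ)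
    {x y : X} (hxy : x < y) :
    (∃! c : K, c ≠ 0 ∧
        φ (eSingle K x y hxy.le) - c • eSingle K x y hxy.le ∈
          Jpow K (X := X) (chainLen x y + 1)) ∧
    ∀ c : K, c ≠ 0 →
      φ (eSingle K x y hxy.le) - c • eSingle K x y hxy.le ∈
        Jpow K (X := X) (chainLen x y + 1) →
      (¬IsMin x ∨ ¬IsMax y) → c = 1 :=
  stmt3_general φ hφ hxy
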